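/- arXiv:2509.02874 — 8 statements merged into one kernel-verified Lean document; each statement's English description precedes it below -/
import Mathlib

section
/- For every integer n ≥ 1 and every real number α, det(I − α·A_{P_n}) = d_n(α). -/
/-- `dpoly n α = ∑_{m=0}^{⌊n/2⌋} (-1)^m C(n-m, m) α^(2m)`. -/
noncomputable def dpoly (n : ℕ) (α : ℝ) : ℝ :=
  ∑ m ∈ Finset.range (n / 2 + 1), (-1 : ℝ) ^ m * (Nat.choose (n - m) m : ℝ) * α ^ (2 * m)

/-- Adjacency matrix of the path graph on `n` vertices. -/
def pathAdj (n : ℕ) : Matrix (Fin n) (Fin n) ℝ :=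
  fun i j => if i.val + 1 = j.val ∨ j.val + 1 = i.val then 1 else 0

/-!
Let `D n = det (1 - a • A)` for the path on `n` vertices. Expanding along the first row, and the
minor of the entry `(0, 1)` along its first column, deletes one end vertex or an end edge of the
path, so `D (n + 2) = D (n + 1) - a ^ 2 * D n`. By Pascal's rule the sums of `C(i, j) (-a ^ 2) ^ j`
over `i + j = n` satisfy the same recurrence, and `C(n - m, m)` vanishes for `m > n / 2`.
-/

open Finset Matrix SimpleGraph

lemma sum_antidiagonal_choose_smul_pow_add_two {R : Type*} [Semiring R] (x : R) (n : ℕ) :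
    ∑ p ∈ antidiagonal (n + 2), p.1.choose p.2 • x ^ p.2 =
      ∑ p ∈ antidiagonal (n + 1), p.1.choose p.2 • x ^ p.2 +
        x * ∑ p ∈ antidiagonal n, p.1.choose p.2 • x ^ p.2 := by
  have pascal (p : ℕ × ℕ) : (p.1 + 1).choose (p.2 + 1) • x ^ (p.2 + 1) =
      p.1.choose (p.2 + 1) • x ^ (p.2 + 1) + x * p.1.choose p.2 • x ^ p.2 := by
    rw [Nat.choose_succ_succ', add_comm, add_smul, mul_smul_comm, ← pow_succ']
  rw [Nat.antidiagonal_succ_succ', Nat.antidiagonal_succ']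
  simp [pascal, sum_add_distrib, mul_sum, add_assoc, -nsmul_eq_mul]

lemma sum_antidiagonal_choose_smul {M : Type*} [AddCommMonoid M] (f : ℕ → M) (n : ℕ) :
    ∑ p ∈ antidiagonal n, p.1.choose p.2 • f p.2 =
      ∑ m ∈ range (n / 2 + 1), (n - m).choose m • f m := by
  rw [← Nat.sum_antidiagonal_swap, Nat.sum_antidiagonal_eq_sum_range_succ_mk]
  refine (sum_subset (range_mono (by lia)) fun m _ hm ↦ ?_).symm
  rw [mem_range] at hm
  rw [Prod.swap_prod_mk, Nat.choose_eq_zero_of_lt (by lia), zero_smul]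

section Determinant

variable {R : Type*} [CommRing R] {n : ℕ}

lemma det_eq_mul_det_of_column_zero (M : Matrix (Fin (n + 1)) (Fin (n + 1)) R)
    (hcol : ∀ i : Fin n, M i.succ 0 = 0) :
    M.det = M 0 0 * (M.submatrix Fin.succ Fin.succ).det := by
  simp [det_succ_column_zero, Fin.sum_univ_succ, hcol]

lemma det_add_two_of_tridiagonal_border (M : Matrix (Fin (n + 2)) (Fin (n + 2)) R)
    (hrow : ∀ j : Fin n, M 0 j.succ.succ = 0) (hcol : ∀ i : Fin n, M i.succ.succ 0 = 0) :
    M.det = M 0 0 * (M.submatrix Fin.succ Fin.succ).det -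
      M 0 1 * M 1 0 * ((M.submatrix Fin.succ Fin.succ).submatrix Fin.succ Fin.succ).det := by
  have det_minor_zero_one : (M.submatrix Fin.succ (Fin.succAbove 1)).det =
      M 1 0 * ((M.submatrix Fin.succ Fin.succ).submatrix Fin.succ Fin.succ).det := by
    rw [det_eq_mul_det_of_column_zero _ (by simpa using hcol)]
    simp [Function.comp_def]
  rw [det_succ_row_zero, Fin.sum_univ_succ, Fin.sum_univ_succ]
  simp [hrow, det_minor_zero_one, sub_eq_add_neg, mul_assoc]

end Determinant

section PathGraph

instance decidableRelPathGraphAdj (n : ℕ) : DecidableRel (pathGraph n).Adj :=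
  fun _ _ ↦ decidable_of_iff' _ pathGraph_adj

variable {R : Type*} [CommRing R]

lemma submatrix_succ_one_sub_smul_adjMatrix_pathGraph (a : R) (n : ℕ) :
    (1 - a • (pathGraph (n + 1)).adjMatrix R).submatrix Fin.succ Fin.succ =
      1 - a • (pathGraph n).adjMatrix R := by
  ext i j
  simp [pathGraph_adj, one_apply]

lemma det_one_sub_smul_adjMatrix_pathGraph_add_two (a : R) (n : ℕ) :
    (1 - a • (pathGraph (n + 2)).adjMatrix R).det =
      (1 - a • (pathGraph (n + 1)).adjMatrix R).det +
        -a ^ 2 * (1 - a • (pathGraph n).adjMatrix R).det := by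
  rw [det_add_two_of_tridiagonal_border, submatrix_succ_one_sub_smul_adjMatrix_pathGraph,
    submatrix_succ_one_sub_smul_adjMatrix_pathGraph]
  · simp [pathGraph_adj, sub_eq_add_neg, sq]
  all_goals simp [pathGraph_adj, one_apply, Fin.ext_iff]

lemma det_one_sub_smul_adjMatrix_pathGraph (a : R) (n : ℕ) :
    (1 - a • (pathGraph n).adjMatrix R).det =
      ∑ p ∈ antidiagonal n, p.1.choose p.2 • (-a ^ 2) ^ p.2 := by
  induction n using Nat.twoStepInduction with
  | zero => simp
  | one => simp [Nat.antidiagonal_succ]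
  | more n ih₀ ih₁ =>
    rw [det_one_sub_smul_adjMatrix_pathGraph_add_two, ih₀, ih₁,
      sum_antidiagonal_choose_smul_pow_add_two]

theorem stmt0_general (n : ℕ) (a : R) :
    (1 - a • (pathGraph n).adjMatrix R).det =
      ∑ m ∈ range (n / 2 + 1), (-1) ^ m * ((n - m).choose m : R) * a ^ (2 * m) := by
  rw [det_one_sub_smul_adjMatrix_pathGraph, sum_antidiagonal_choose_smul]
  refine sum_congr rfl fun m _ ↦ ?_
  rw [nsmul_eq_mul, neg_pow, ← pow_mul, mul_left_comm, mul_assoc]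

end PathGraph

lemma pathAdj_eq_adjMatrix (n : ℕ) : pathAdj n = (pathGraph n).adjMatrix ℝ := by
  ext i j
  simp [pathAdj, pathGraph_adj]

theorem stmt0 (n : ℕ) (hn : 1 ≤ n) (α : ℝ) :
    Matrix.det ((1 : Matrix (Fin n) (Fin n) ℝ) - α • pathAdj n) = dpoly n α := by
  rw [pathAdj_eq_adjMatrix]
  exact stmt0_general n α
end

section
/- For every integer n > 4 and every real number α with 0 < α < 1/2, det(I − α·A_{C_n}) = d_{n−1}(α) − 2α^n − 2α²·d_{n−2}(α). -/
/-- Adjacency matrix of the cycle graph on `n` vertices. -/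
def cycleAdj (n : ℕ) : Matrix (Fin n) (Fin n) ℝ :=
  fun i j => if (i.val + 1) % n = j.val ∨ (j.val + 1) % n = i.val then 1 else 0

/-!
Let `P` be the permutation matrix of the cyclic shift, so that `A_{C_n} = P + Pᵀ`. If
`u ^ 2 + v ^ 2 = 1` and `u * v = α`, then `I - α A_{C_n} = (u I - v P) (u I - v P)ᵀ`. In the Leibniz
expansion of `det (u I - v P)` only the identity and the shift contribute, so this determinant is
`u ^ n - v ^ n` and `det (I - α A_{C_n}) = (u ^ 2) ^ n + (v ^ 2) ^ n - 2 α ^ n`. The power sums of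
`u ^ 2` and `v ^ 2`, which have sum `1` and product `α ^ 2`, satisfy the same recurrence
`d_{n+2} = d_{n+1} - α ^ 2 d_n` as the `d_n`. Such `u` and `v` exist over `ℂ` for every real `α`.
-/

section FullCycle

variable {ι : Type*} [Fintype ι] [DecidableEq ι] {σ : Equiv.Perm ι}

theorem eq_one_or_eq_of_forall_apply_eq_or (hσ : σ.IsCycle) (hsupp : σ.support = Finset.univ)
    {τ : Equiv.Perm ι} (hτ : ∀ i, τ i = i ∨ τ i = σ i) : τ = 1 ∨ τ = σ := by
  have hne (i : ι) : σ i ≠ i := Equiv.Perm.mem_support.1 (hsupp ▸ Finset.mem_univ i)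
  refine or_iff_not_imp_left.2 fun hτ_one ↦ ?_
  obtain ⟨i, hi⟩ : ∃ i, τ i ≠ i := by
    contrapose! hτ_one
    exact Equiv.ext hτ_one
  have step {j : ι} (hj : τ j = σ j) : τ (σ j) = σ (σ j) :=
    (hτ (σ j)).resolve_left fun hfix ↦ hne j (τ.injective (hfix.trans hj.symm))
  have along_orbit (k : ℕ) : τ ((σ ^ k) i) = σ ((σ ^ k) i) := by
    induction k with
    | zero => exact (hτ i).resolve_left hi
    | succ k ih => simpa only [pow_succ', Equiv.Perm.mul_apply] using step ih
  ext j
  obtain ⟨k, rfl⟩ := hσ.exists_pow_eq (hne i) (hne j)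
  exact along_orbit k

variable {R : Type*} [CommRing R]

theorem det_smul_one_sub_smul_permMatrix (hσ : σ.IsCycle) (hsupp : σ.support = Finset.univ)
    (a b : R) :
    (a • (1 : Matrix ι ι R) - b • σ.permMatrix R).det
      = a ^ Fintype.card ι - b ^ Fintype.card ι := by
  have hne (i : ι) : σ i ≠ i := Equiv.Perm.mem_support.1 (hsupp ▸ Finset.mem_univ i)
  set M := a • (1 : Matrix ι ι R) - b • σ.permMatrix R with hM
  have entry (i j : ι) : M i j = (if i = j then a else 0) - if σ i = j then b else 0 := by
    simp [hM, Matrix.one_apply, eq_comm]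
  have entry_diag (i : ι) : M i i = a := by simp [entry, hne]
  have entry_shift (i : ι) : M i (σ i) = -b := by simp [entry, (hne i).symm]
  have entry_else {i j : ι} (hi : j ≠ i) (hσi : j ≠ σ i) : M i j = 0 := by
    simp [entry, hi.symm, hσi.symm]
  have term_else (τ : Equiv.Perm ι) (hτ : τ ≠ 1 ∧ τ ≠ σ) :
      (Equiv.Perm.sign τ : R) * ∏ i, M.transpose (τ i) i = 0 := by
    obtain ⟨i, hi, hσi⟩ : ∃ i, τ i ≠ i ∧ τ i ≠ σ i := by
      contrapose! hτ
      exact (eq_one_or_eq_of_forall_apply_eq_or hσ hsupp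
        fun i ↦ or_iff_not_imp_left.2 (hτ i)).resolve_left
    exact mul_eq_zero_of_right _ (Finset.prod_eq_zero (Finset.mem_univ i) (entry_else hi hσi))
  rw [← Matrix.det_transpose, Matrix.det_apply', Fintype.sum_eq_add 1 σ hσ.ne_one.symm term_else]
  simp only [Matrix.transpose_apply, Equiv.Perm.one_apply, entry_diag, entry_shift,
    Finset.prod_const, Equiv.Perm.sign_one, hσ.sign, hsupp, Finset.card_univ, neg_pow b]
  have hsq : ((-1 : R) ^ Fintype.card ι) * (-1) ^ Fintype.card ι = 1 := by simp [← mul_pow]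
  push_cast
  linear_combination -b ^ Fintype.card ι * hsq

theorem one_sub_mul_smul_permMatrix_add_transpose (σ : Equiv.Perm ι) {u v : R}
    (huv : u ^ 2 + v ^ 2 = 1) :
    1 - (u * v) • (σ.permMatrix R + (σ.permMatrix R).transpose)
      = (u • 1 - v • σ.permMatrix R) * (u • 1 - v • σ.permMatrix R).transpose := by
  have orthogonal : σ.permMatrix R * (σ.permMatrix R).transpose = 1 := by
    rw [Matrix.transpose_permMatrix, ← Matrix.permMatrix_mul, inv_mul_cancel,
      Matrix.permMatrix_one]
  calc 1 - (u * v) • (σ.permMatrix R + (σ.permMatrix R).transpose)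
      = (u ^ 2 + v ^ 2) • (1 : Matrix ι ι R)
          - (u * v) • (σ.permMatrix R + (σ.permMatrix R).transpose) := by rw [huv, one_smul]
    _ = (u • 1 - v • σ.permMatrix R) * (u • 1 - v • σ.permMatrix R).transpose := by
      simp only [Matrix.transpose_sub, Matrix.transpose_smul, Matrix.transpose_one, sub_mul,
        mul_sub, Matrix.smul_mul, Matrix.mul_smul, one_mul, mul_one, orthogonal]
      module

theorem det_one_sub_mul_smul_permMatrix_add_transpose (hσ : σ.IsCycle)
    (hsupp : σ.support = Finset.univ) {u v : R} (huv : u ^ 2 + v ^ 2 = 1) :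
    (1 - (u * v) • (σ.permMatrix R + (σ.permMatrix R).transpose)).det
      = (u ^ Fintype.card ι - v ^ Fintype.card ι) ^ 2 := by
  rw [one_sub_mul_smul_permMatrix_add_transpose σ huv, Matrix.det_mul, Matrix.det_transpose,
    det_smul_one_sub_smul_permMatrix hσ hsupp, sq]

end FullCycle

theorem cycleAdj_eq_permMatrix_add_transpose {n : ℕ} (hn : 2 < n) :
    cycleAdj n = (finRotate n).permMatrix ℝ + ((finRotate n).permMatrix ℝ).transpose := by
  obtain ⟨k, rfl⟩ : ∃ k, n = k + 3 := ⟨n - 3, by omega⟩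
  ext i j
  have adj_iff (i j : Fin (k + 3)) : (i.val + 1) % (k + 3) = j.val ↔ finRotate (k + 3) i = j := by
    rw [finRotate_apply, Fin.ext_iff, Fin.val_add, Fin.val_one]
  have not_both : ¬ (finRotate (k + 3) i = j ∧ finRotate (k + 3) j = i) := by
    rintro ⟨rfl, h⟩
    rw [finRotate_apply, finRotate_apply, add_assoc, add_eq_left] at h
    simpa [Fin.val_add, Nat.mod_eq_of_lt hn] using congrArg Fin.val h
  simp only [cycleAdj, adj_iff, Matrix.add_apply, Matrix.transpose_apply, PEquiv.toMatrix_apply,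
    Equiv.toPEquiv_apply, Option.mem_some_iff]
  split_ifs <;> simp_all

theorem dpoly_eq_sum_range {n N : ℕ} (h : n < 2 * N) (α : ℝ) :
    dpoly n α = ∑ m ∈ Finset.range N, (-1 : ℝ) ^ m * ((n - m).choose m : ℝ) * α ^ (2 * m) := by
  refine Finset.sum_subset (Finset.range_subset_range.2 (by omega)) fun m _ hm ↦ ?_
  have hlt : n - m < m := by
    rw [Finset.mem_range] at hm
    omega
  rw [Nat.choose_eq_zero_of_lt hlt, Nat.cast_zero, mul_zero, zero_mul]

theorem dpoly_add_two (n : ℕ) (α : ℝ) :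
    dpoly (n + 2) α = dpoly (n + 1) α - α ^ 2 * dpoly n α := by
  have pascal {m : ℕ} (hm : m ≤ n) :
      (n + 2 - (m + 1)).choose (m + 1) = (n - m).choose m + (n + 1 - (m + 1)).choose (m + 1) := by
    rw [show n + 2 - (m + 1) = n - m + 1 by omega, show n + 1 - (m + 1) = n - m by omega,
      Nat.choose_succ_succ]
  rw [dpoly_eq_sum_range (N := n + 2) (by omega), dpoly_eq_sum_range (N := n + 2) (by omega),
    dpoly_eq_sum_range (N := n + 1) (by omega), Finset.sum_range_succ' _ (n + 1),
    Finset.sum_range_succ' _ (n + 1), Finset.mul_sum, add_sub_right_comm,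
    ← Finset.sum_sub_distrib]
  congr 1
  refine Finset.sum_congr rfl fun m hm ↦ ?_
  rw [pascal (by simpa [Nat.lt_succ_iff] using hm)]
  push_cast
  ring

theorem dpoly_zero (α : ℝ) : dpoly 0 α = 1 := by simp [dpoly]

theorem dpoly_one (α : ℝ) : dpoly 1 α = 1 := by simp [dpoly]

theorem pow_add_pow_eq_algebraMap_dpoly {R : Type*} [CommRing R] [Algebra ℝ R] {p q : R} {α : ℝ}
    (hadd : p + q = 1) (hmul : p * q = algebraMap ℝ R α ^ 2) (n : ℕ) :
    p ^ (n + 2) + q ^ (n + 2)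
      = algebraMap ℝ R (dpoly (n + 1) α - 2 * α ^ 2 * dpoly n α) := by
  induction n using Nat.twoStepInduction with
  | zero =>
    simp only [zero_add, dpoly_zero, dpoly_one, map_sub, map_mul, map_pow, map_one, map_ofNat]
    linear_combination (p + q + 1) * hadd - 2 * hmul
  | one =>
    rw [dpoly_add_two 0]
    simp only [zero_add, dpoly_zero, dpoly_one, map_sub, map_mul, map_pow, map_one, map_ofNat]
    linear_combination (p ^ 2 - p * q + q ^ 2 + p + q + 1) * hadd - 3 * hmul
  | more n ih₀ ih₁ =>
    have newton : p ^ (n + 4) + q ^ (n + 4)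
        = (p ^ (n + 3) + q ^ (n + 3))
          - algebraMap ℝ R α ^ 2 * (p ^ (n + 2) + q ^ (n + 2)) := by
      linear_combination (p ^ (n + 3) + q ^ (n + 3)) * hadd - (p ^ (n + 2) + q ^ (n + 2)) * hmul
    rw [newton, ih₁, ih₀, dpoly_add_two (n + 1), dpoly_add_two n]
    simp only [map_sub, map_mul, map_pow]
    ring

theorem exists_sq_add_sq_eq_one_and_mul_eq {K : Type*} [Field K] [IsAlgClosed K] [NeZero (2 : K)]
    (a : K) : ∃ u v : K, u ^ 2 + v ^ 2 = 1 ∧ u * v = a := by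
  obtain ⟨s, hs⟩ := IsAlgClosed.exists_pow_nat_eq (1 + 2 * a) two_pos
  obtain ⟨t, ht⟩ := IsAlgClosed.exists_pow_nat_eq (1 - 2 * a) two_pos
  refine ⟨(s + t) / 2, (s - t) / 2, ?_, ?_⟩
  · field_simp
    linear_combination 2 * hs + 2 * ht
  · field_simp
    linear_combination hs - ht

theorem algebraMap_det_one_sub_smul_cycleAdj {R : Type*} [CommRing R] [Algebra ℝ R] {n : ℕ}
    (hn : 2 < n) {u v : R} {α : ℝ} (hsq : u ^ 2 + v ^ 2 = 1) (hmul : u * v = algebraMap ℝ R α) :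
    algebraMap ℝ R (1 - α • cycleAdj n).det = (u ^ n - v ^ n) ^ 2 := by
  have hmap : (algebraMap ℝ R).mapMatrix (1 - α • cycleAdj n)
      = 1 - (u * v) • ((finRotate n).permMatrix R + ((finRotate n).permMatrix R).transpose) := by
    rw [cycleAdj_eq_permMatrix_add_transpose hn, hmul, map_sub, map_one, RingHom.mapMatrix_apply,
      Matrix.map_smul' _ _ _ (map_mul _), Matrix.map_add _ (map_add _), Matrix.transpose_map,
      PEquiv.map_toMatrix]
  rw [RingHom.map_det, hmap, det_one_sub_mul_smul_permMatrix_add_transpose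
    (isCycle_finRotate_of_le hn.le) (support_finRotate_of_le hn.le) hsq, Fintype.card_fin]

theorem stmt1_general (n : ℕ) (hn : 2 < n) (α : ℝ) :
    Matrix.det ((1 : Matrix (Fin n) (Fin n) ℝ) - α • cycleAdj n)
      = dpoly (n - 1) α - 2 * α ^ n - 2 * α ^ 2 * dpoly (n - 2) α := by
  obtain ⟨u, v, hsq, hmul⟩ := exists_sq_add_sq_eq_one_and_mul_eq (algebraMap ℝ ℂ α)
  have hlucas := pow_add_pow_eq_algebraMap_dpoly hsq (α := α) (by rw [← hmul, mul_pow]) (n - 2)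
  rw [show n - 2 + 1 = n - 1 by omega, show n - 2 + 2 = n by omega] at hlucas
  apply (algebraMap ℝ ℂ).injective
  calc algebraMap ℝ ℂ (1 - α • cycleAdj n).det
      = (u ^ n - v ^ n) ^ 2 := algebraMap_det_one_sub_smul_cycleAdj hn hsq hmul
    _ = (u ^ 2) ^ n + (v ^ 2) ^ n - 2 * (u * v) ^ n := by ring
    _ = algebraMap ℝ ℂ (dpoly (n - 1) α - 2 * α ^ n - 2 * α ^ 2 * dpoly (n - 2) α) := by
      rw [hlucas, hmul]
      simp only [map_sub, map_mul, map_pow, map_ofNat]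
      ring

theorem stmt1 (n : ℕ) (hn : 4 < n) (α : ℝ) (hα0 : 0 < α) (hα1 : α < 1 / 2) :
    Matrix.det ((1 : Matrix (Fin n) (Fin n) ℝ) - α • cycleAdj n)
      = dpoly (n - 1) α - 2 * α ^ n - 2 * α ^ 2 * dpoly (n - 2) α :=
  stmt1_general n (by omega) α
end

section
/- For all integers n ≥ k ≥ 1 and every real α, d_k(α)·d_n(α) − d_{k−1}(α)·d_{n+1}(α) = α^{2k}·d_{n−k}(α). -/
/-!
By Pascal's rule the sums `d_n(α)` satisfy `d_{n+2} = d_{n+1} - α² d_n`, and so does the shifted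
sequence `i ↦ d_{n-k+1+i}`. The left-hand side is the Casoratian of these two solutions at
`i = k - 1`. A Casoratian is multiplied by `α²` at each step, so it equals
`α^(2(k-1)) (d_{n-k+1} - d_{n-k+2}) = α^(2k) d_{n-k}`.
-/

open Finset

theorem casoratian_eq_pow_mul {R : Type*} [CommRing R] {a b : R} {u v : ℕ → R}
    (hu : ∀ n, u (n + 2) = a * u (n + 1) + b * u n)
    (hv : ∀ n, v (n + 2) = a * v (n + 1) + b * v n) (n : ℕ) :
    u (n + 1) * v n - u n * v (n + 1) = (-b) ^ n * (u 1 * v 0 - u 0 * v 1) := by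
  induction n with
  | zero => simp
  | succ n ih =>
    rw [hu, hv, pow_succ]
    linear_combination -b * ih

/-- The sum along the `n`-th shallow diagonal of Pascal's triangle, weighted by the powers of `x`.
It is the value at `x` of the Jacobsthal polynomial usually indexed by `n + 1`, and `d_n(α)` is its
value at `-α²`. Summing over all of `antidiagonal n` adds only vanishing binomial coefficients to
`d_n` and avoids truncated subtraction. -/
def shallowDiagonalSum {R : Type*} [Semiring R] (x : R) (n : ℕ) : R :=
  ∑ p ∈ antidiagonal n, (p.1.choose p.2 : R) * x ^ p.2

section Semiring

variable {R : Type*} [Semiring R] (x : R)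

@[simp]
theorem shallowDiagonalSum_zero : shallowDiagonalSum x 0 = 1 := by
  simp [shallowDiagonalSum]

@[simp]
theorem shallowDiagonalSum_one : shallowDiagonalSum x 1 = 1 := by
  simp [shallowDiagonalSum, Nat.antidiagonal_succ]

theorem shallowDiagonalSum_add_two (n : ℕ) :
    shallowDiagonalSum x (n + 2) = shallowDiagonalSum x (n + 1) + x * shallowDiagonalSum x n := by
  have pascal (i j : ℕ) : ((i + 1).choose (j + 1) : R) * x ^ (j + 1) =
      x * (i.choose j * x ^ j) + i.choose (j + 1) * x ^ (j + 1) := by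
    rw [Nat.choose_succ_succ, Nat.cast_add, add_mul, pow_succ', (Nat.cast_commute _ x).left_comm]
  simp [shallowDiagonalSum, Nat.antidiagonal_succ_succ', Nat.antidiagonal_succ', pascal,
    sum_add_distrib, mul_sum, add_comm, add_left_comm]

theorem shallowDiagonalSum_eq_sum_range (n : ℕ) :
    shallowDiagonalSum x n = ∑ m ∈ range (n / 2 + 1), ((n - m).choose m : R) * x ^ m := by
  rw [shallowDiagonalSum, ← Nat.sum_antidiagonal_swap]
  simp only [Prod.fst_swap, Prod.snd_swap]
  rw [Nat.sum_antidiagonal_eq_sum_range_succ (fun m i ↦ (i.choose m : R) * x ^ m)]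
  refine (sum_subset (range_mono (by lia)) fun m _ hm ↦ ?_).symm
  rw [mem_range] at hm
  rw [Nat.choose_eq_zero_of_lt (by lia), Nat.cast_zero, zero_mul]

end Semiring

theorem dpoly_eq_shallowDiagonalSum (n : ℕ) (α : ℝ) :
    dpoly n α = shallowDiagonalSum (-α ^ 2) n := by
  rw [dpoly, shallowDiagonalSum_eq_sum_range]
  refine sum_congr rfl fun m _ ↦ ?_
  rw [neg_pow (α ^ 2), ← pow_mul]
  ring

theorem stmt6_general {R : Type*} [CommRing R] (n k : ℕ) (hk : 1 ≤ k) (hkn : k ≤ n) (x : R) :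
    shallowDiagonalSum x k * shallowDiagonalSum x n -
        shallowDiagonalSum x (k - 1) * shallowDiagonalSum x (n + 1) =
      (-x) ^ k * shallowDiagonalSum x (n - k) := by
  obtain ⟨i, rfl⟩ := Nat.exists_eq_add_of_le' hk
  obtain ⟨j, rfl⟩ := Nat.exists_eq_add_of_le hkn
  have recurrence (m : ℕ) : shallowDiagonalSum x (m + 2) =
      1 * shallowDiagonalSum x (m + 1) + x * shallowDiagonalSum x m := by
    rw [one_mul, shallowDiagonalSum_add_two]
  have casoratian : shallowDiagonalSum x (i + 1) * shallowDiagonalSum x (i + 1 + j) -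
        shallowDiagonalSum x i * shallowDiagonalSum x (i + 1 + j + 1) =
      (-x) ^ i * (shallowDiagonalSum x (j + 1) - shallowDiagonalSum x (j + 2)) := by
    simpa [add_comm, add_left_comm] using casoratian_eq_pow_mul recurrence
      (v := fun m ↦ shallowDiagonalSum x (j + 1 + m)) (fun m ↦ recurrence (j + 1 + m)) i
  rw [Nat.add_sub_cancel, Nat.add_sub_cancel_left, casoratian, shallowDiagonalSum_add_two]
  ring

theorem stmt6 (n k : ℕ) (hk : 1 ≤ k) (hkn : k ≤ n) (α : ℝ) :
    dpoly k α * dpoly n α - dpoly (k - 1) α * dpoly (n + 1) α = α ^ (2 * k) * dpoly (n - k) α := by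
  simpa only [dpoly_eq_shallowDiagonalSum, neg_neg, pow_mul] using
    stmt6_general n k hk hkn (-α ^ 2)
end

section
/- Let φ = (√5 − 1)/2, Φ = (√5 + 1)/2, and for an integer n ≥ 1 let FR_n = (Φ^{n+1} − φ^{n+1})/(√5·(Φ^n − φ^n)). Then for every real α with 0 < α < 1/√5 and every integer n ≥ 1, d_n(α) ≥ FR_n · d_{n−1}(α). -/
/-- `φ = (√5 - 1)/2`. -/
noncomputable def phi : ℝ := (Real.sqrt 5 - 1) / 2

/-- `Φ = (√5 + 1)/2`. -/
noncomputable def Phi : ℝ := (Real.sqrt 5 + 1) / 2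

/-- `FR n = (Φ^(n+1) - φ^(n+1)) / (√5 (Φ^n - φ^n))`. -/
noncomputable def FR (n : ℕ) : ℝ :=
  (Phi ^ (n + 1) - phi ^ (n + 1)) / (Real.sqrt 5 * (Phi ^ n - phi ^ n))

/-!
Iterating `d (n + 2) = d (n + 1) - α² d n` shows that a larger `α²` makes the ratio
`d (n + 1) / d n` smaller, as long as the terms stay positive, which they do for `α² ≤ 1/4`:
then each term is at least half of the previous one. If `x` and `y` satisfy `x y = α² (x + y)²`,
the recurrence is solved by Binet's formula; at `α = 1/√5` one may take `x = Φ`, `y = φ`, and so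
`FR n` is exactly the ratio at the right endpoint `1/√5`.
-/

theorem dpoly_eq_sum_antidiagonal (n : ℕ) (α : ℝ) :
    dpoly n α =
      ∑ p ∈ Finset.HasAntidiagonal.antidiagonal n, (p.1.choose p.2 : ℝ) * (-α ^ 2) ^ p.2 := by
  rw [← Finset.Nat.sum_antidiagonal_swap, Finset.Nat.sum_antidiagonal_eq_sum_range_succ_mk, dpoly]
  have summand_eq (m : ℕ) : (-1 : ℝ) ^ m * ((n - m).choose m : ℝ) * α ^ (2 * m) =
      ((n - m).choose m : ℝ) * (-α ^ 2) ^ m := by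
    rw [neg_pow (α ^ 2), pow_mul]
    ring
  simp only [summand_eq]
  refine Finset.sum_subset (Finset.range_mono (by lia)) fun m _ hm ↦ ?_
  rw [Finset.mem_range, not_lt] at hm
  simp [Nat.choose_eq_zero_of_lt (show n - m < m by lia)]

theorem dpoly_pos_and_le_two_mul_dpoly_succ {α : ℝ} (hα : α ^ 2 ≤ 1 / 4) (n : ℕ) :
    0 < dpoly n α ∧ dpoly n α ≤ 2 * dpoly (n + 1) α := by
  induction n with
  | zero => norm_num [dpoly_zero, dpoly_one]
  | succ n ih =>
    obtain ⟨pos, le_two_mul⟩ := ih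
    have := mul_le_mul_of_nonneg_right hα pos.le
    rw [dpoly_add_two]
    constructor <;> linarith

theorem dpoly_pos {α : ℝ} (hα : α ^ 2 ≤ 1 / 4) (n : ℕ) : 0 < dpoly n α :=
  (dpoly_pos_and_le_two_mul_dpoly_succ hα n).1

theorem dpoly_succ_mul_le_dpoly_succ_mul {α β : ℝ} (hαβ : α ^ 2 ≤ β ^ 2) (hβ : β ^ 2 ≤ 1 / 4)
    (n : ℕ) : dpoly (n + 1) β * dpoly n α ≤ dpoly (n + 1) α * dpoly n β := by
  induction n with
  | zero => simp only [zero_add, dpoly_zero, dpoly_one, le_refl]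
  | succ n ih =>
    have hα : α ^ 2 ≤ 1 / 4 := hαβ.trans hβ
    have weighted : α ^ 2 * (dpoly (n + 1) β * dpoly n α) ≤
        β ^ 2 * (dpoly (n + 1) α * dpoly n β) :=
      mul_le_mul hαβ ih (mul_pos (dpoly_pos hβ _) (dpoly_pos hα _)).le (sq_nonneg β)
    rw [dpoly_add_two, dpoly_add_two]
    linarith

theorem dpoly_succ_div_le_dpoly_succ_div {α β : ℝ} (hαβ : α ^ 2 ≤ β ^ 2) (hβ : β ^ 2 ≤ 1 / 4)
    (n : ℕ) : dpoly (n + 1) β / dpoly n β ≤ dpoly (n + 1) α / dpoly n α :=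
  (div_le_div_iff₀ (dpoly_pos hβ n) (dpoly_pos (hαβ.trans hβ) n)).2
    (dpoly_succ_mul_le_dpoly_succ_mul hαβ hβ n)

theorem sub_mul_add_pow_mul_dpoly {x y α : ℝ} (h : x * y = α ^ 2 * (x + y) ^ 2) (n : ℕ) :
    (x - y) * (x + y) ^ n * dpoly n α = x ^ (n + 1) - y ^ (n + 1) := by
  induction n using Nat.twoStepInduction with
  | zero => simp [dpoly_zero]
  | one =>
    rw [dpoly_one]
    ring
  | more n ih₀ ih₁ =>
    rw [dpoly_add_two]
    linear_combination (x + y) * ih₁ - x * y * ih₀ + (x - y) * (x + y) ^ n * dpoly n α * h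

theorem Phi_sub_phi : Phi - phi = 1 := by
  rw [Phi, phi]
  ring

theorem Phi_add_phi : Phi + phi = √5 := by
  rw [Phi, phi]
  ring

theorem Phi_mul_phi : Phi * phi = 1 := by
  have sq_sqrt_five : √5 ^ 2 = (5 : ℝ) := Real.sq_sqrt (by norm_num)
  rw [Phi, phi]
  linear_combination sq_sqrt_five / 4

theorem sqrt_five_pow_mul_dpoly (n : ℕ) :
    √5 ^ n * dpoly n (1 / √5) = Phi ^ (n + 1) - phi ^ (n + 1) := by
  have h : Phi * phi = (1 / √5) ^ 2 * (Phi + phi) ^ 2 := by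
    rw [Phi_mul_phi, Phi_add_phi, ← mul_pow, one_div_mul_cancel (by positivity), one_pow]
  simpa only [Phi_sub_phi, Phi_add_phi, one_mul] using sub_mul_add_pow_mul_dpoly h n

theorem FR_succ (n : ℕ) : FR (n + 1) = dpoly (n + 1) (1 / √5) / dpoly n (1 / √5) := by
  rw [FR, ← sqrt_five_pow_mul_dpoly, ← sqrt_five_pow_mul_dpoly, ← mul_assoc, ← pow_succ',
    mul_div_mul_left _ _ (by positivity)]

theorem stmt11_general (α : ℝ) (hα : |α| ≤ 1 / √5) (n : ℕ) (hn : 1 ≤ n) :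
    dpoly n α ≥ FR n * dpoly (n - 1) α := by
  obtain ⟨k, rfl⟩ := Nat.exists_eq_add_of_le' hn
  have hαβ : α ^ 2 ≤ (1 / √5) ^ 2 := sq_le_sq' (neg_le_of_abs_le hα) (le_of_abs_le hα)
  have hβ : (1 / √5) ^ 2 ≤ (1 / 4 : ℝ) := by
    rw [div_pow, Real.sq_sqrt (by norm_num)]
    norm_num
  rw [Nat.add_sub_cancel, ge_iff_le, FR_succ, ← le_div_iff₀ (dpoly_pos (hαβ.trans hβ) k)]
  exact dpoly_succ_div_le_dpoly_succ_div hαβ hβ k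

theorem stmt11 (α : ℝ) (hα0 : 0 < α) (hα1 : α < 1 / Real.sqrt 5) (n : ℕ) (hn : 1 ≤ n) :
    dpoly n α ≥ FR n * dpoly (n - 1) α :=
  stmt11_general α ((abs_of_pos hα0).trans_le hα1.le) n hn
end

section
/- Fix a real α with 0 < α < 1/2 and integers 1 ≤ i ≤ j. Then, as n → ∞ (over n ≥ j), the (i,j) entry of (I − α·A_{P_n})^{-1} converges to α^{j−i}·d_{i−1}(α)·(2/(1 + √(1 − 4α²)))^j. In particular, for i < j the Katz similarity index K_{P_n}(α)_{i,j} converges to this limit as n → ∞. -/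
/-
The tridiagonal matrix `P - α A` of the path has determinant the Lucas number `U (n + 1)` with
parameters `P` and `Q = α²`, and `dpoly n α` is `U (n + 1)` for `P = 1`. For `p ≤ q` (counted from
`1`) its inverse has `(p, q)` entry `α ^ (q - p) * U p * U (n + 1 - q) / U (n + 1)`: away from the
diagonal this is the recurrence of `U`, on the diagonal its addition formula. With
`0 ≤ y ≤ x` the roots of `X² - P X + Q`, one has `U (k + 1) = x * U k + y ^ k` and
`k * y ^ k ≤ y * U k`, so `U (k + 1) / U k → x`, even when the two roots coincide.
-/

open Filter Finset Topology
open scoped Matrix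

section LucasSequence

variable {R : Type*} [CommRing R]

/-- The Lucas sequence of the first kind `U_n(P, Q)`. With `Q = α²` its terms are the
determinants of the matrices `P - α A` of paths. -/
def lucasU (P Q : R) : ℕ → R
  | 0 => 0
  | 1 => 1
  | n + 2 => P * lucasU P Q (n + 1) - Q * lucasU P Q n

lemma lucasU_zero (P Q : R) : lucasU P Q 0 = 0 := rfl

lemma lucasU_one (P Q : R) : lucasU P Q 1 = 1 := rfl

lemma lucasU_add_two (P Q : R) (n : ℕ) :
    lucasU P Q (n + 2) = P * lucasU P Q (n + 1) - Q * lucasU P Q n := rfl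

lemma lucasU_add_add_one (P Q : R) (m n : ℕ) :
    lucasU P Q (m + n + 1) =
      lucasU P Q (m + 1) * lucasU P Q (n + 1) - Q * lucasU P Q m * lucasU P Q n := by
  induction m using Nat.twoStepInduction with
  | zero => simp [lucasU_zero, lucasU_one]
  | one => simp [lucasU_add_two, lucasU_zero, lucasU_one, add_comm 1 n]
  | more m ih₀ ih₁ =>
    rw [show m + 2 + n + 1 = m + n + 1 + 2 by ring, lucasU_add_two, ih₀,
      show m + n + 1 + 1 = m + 1 + n + 1 by ring, ih₁, lucasU_add_two P Q (m + 1),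
      lucasU_add_two P Q m]
    ring

lemma lucasU_succ_eq_sum_choose (P Q : R) (n : ℕ) :
    lucasU P Q (n + 1) =
      ∑ k ∈ antidiagonal n, (k.2.choose k.1 : R) * P ^ (k.2 - k.1) * (-Q) ^ k.1 := by
  induction n using Nat.twoStepInduction with
  | zero => simp [lucasU_one]
  | one => simp [lucasU_add_two, lucasU_zero, lucasU_one, Nat.antidiagonal_succ]
  | more n ih₀ ih₁ =>
    have pascal (k m : ℕ) : ((k + 1).choose (m + 1) : R) * P ^ (k - m) * (-Q) ^ (m + 1) =
        P * ((k.choose (m + 1) : R) * P ^ (k - (m + 1)) * (-Q) ^ (m + 1)) -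
          Q * ((k.choose m : R) * P ^ (k - m) * (-Q) ^ m) := by
      rcases lt_or_ge m k with hmk | hkm
      · obtain ⟨d, rfl⟩ := Nat.exists_eq_add_of_lt hmk
        rw [Nat.choose_succ_succ, show m + d + 1 - m = d + 1 by omega,
          show m + d + 1 - (m + 1) = d by omega]
        push_cast
        ring
      · rw [Nat.choose_succ_succ, Nat.choose_eq_zero_of_lt (show k < m + 1 by omega)]
        push_cast
        ring
    rw [lucasU_add_two, ih₀, ih₁, Nat.antidiagonal_succ_succ', Nat.antidiagonal_succ]
    simp only [sum_cons, sum_map, Function.Embedding.coe_prodMap, Prod.map_fst, Prod.map_snd,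
      Function.Embedding.coeFn_mk, Function.Embedding.refl_apply, Nat.succ_eq_add_one,
      Nat.add_sub_add_right, pascal, sum_sub_distrib, ← mul_sum, Nat.choose_zero_right,
      Nat.choose_zero_succ]
    push_cast
    ring

lemma lucasU_succ_eq_mul_add_pow {P Q x y : R} (hP : x + y = P) (hQ : x * y = Q) (n : ℕ) :
    lucasU P Q (n + 1) = x * lucasU P Q n + y ^ n := by
  induction n with
  | zero => simp [lucasU_zero, lucasU_one]
  | succ n ih =>
    rw [lucasU_add_two, ih, ← hP, ← hQ]
    ring

end LucasSequence

lemma dpoly_eq_lucasU (n : ℕ) (α : ℝ) : dpoly n α = lucasU 1 (α ^ 2) (n + 1) := by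
  rw [lucasU_succ_eq_sum_choose, Nat.sum_antidiagonal_eq_sum_range_succ_mk, dpoly]
  refine sum_subset_zero_on_sdiff (range_subset_range.2 (by omega)) (fun m hm => ?_) fun m _ => ?_
  · have hlt : n - m < m := by
      rw [Finset.mem_sdiff, mem_range, mem_range] at hm
      omega
    simp [Nat.choose_eq_zero_of_lt hlt]
  · simp only [one_pow, mul_one, neg_pow (α ^ 2), ← pow_mul]
    ring

section LucasOrder

variable {R : Type*} [CommRing R] [PartialOrder R] [IsStrictOrderedRing R] {P Q x y : R}

lemma lucasU_succ_pos (hP : x + y = P) (hQ : x * y = Q) (hx : 0 < x) (hy : 0 ≤ y) (n : ℕ) :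
    0 < lucasU P Q (n + 1) := by
  induction n with
  | zero => simp [lucasU_one]
  | succ n ih =>
    rw [lucasU_succ_eq_mul_add_pow hP hQ]
    positivity

lemma mul_pow_le_lucasU_succ (hP : x + y = P) (hQ : x * y = Q) (hy : 0 ≤ y) (hyx : y ≤ x)
    (n : ℕ) : (n + 1) * y ^ n ≤ lucasU P Q (n + 1) := by
  induction n with
  | zero => simp [lucasU_one]
  | succ n ih =>
    calc ((n + 1 : ℕ) + 1) * y ^ (n + 1) = y * ((n + 1) * y ^ n) + y ^ (n + 1) := by
          push_cast
          ring
      _ ≤ x * lucasU P Q (n + 1) + y ^ (n + 1) := by gcongr; exact hy.trans hyx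
      _ = lucasU P Q (n + 1 + 1) := (lucasU_succ_eq_mul_add_pow hP hQ (n + 1)).symm

end LucasOrder

section LucasLimit

variable {P Q x y : ℝ}

lemma tendsto_lucasU_succ_div (hP : x + y = P) (hQ : x * y = Q) (hx : 0 < x) (hy : 0 ≤ y)
    (hyx : y ≤ x) :
    Tendsto (fun n => lucasU P Q (n + 2) / lucasU P Q (n + 1)) atTop (𝓝 x) := by
  have hpos := lucasU_succ_pos hP hQ hx hy
  have ratio_eq (n : ℕ) : lucasU P Q (n + 2) / lucasU P Q (n + 1) =
      x + y ^ (n + 1) / lucasU P Q (n + 1) := by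
    rw [lucasU_succ_eq_mul_add_pow hP hQ (n + 1), add_div, mul_div_cancel_right₀ _ (hpos n).ne']
  have error_le (n : ℕ) : y ^ (n + 1) / lucasU P Q (n + 1) ≤ y * (1 / (n + 1)) := by
    rw [mul_one_div, div_le_div_iff₀ (hpos n) n.cast_add_one_pos]
    calc y ^ (n + 1) * (n + 1) = y * ((n + 1) * y ^ n) := by ring
      _ ≤ y * lucasU P Q (n + 1) := by gcongr; exact mul_pow_le_lucasU_succ hP hQ hy hyx n
  have error_tendsto : Tendsto (fun n => y ^ (n + 1) / lucasU P Q (n + 1)) atTop (𝓝 0) :=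
    squeeze_zero (fun n => div_nonneg (pow_nonneg hy _) (hpos n).le) error_le <| by
      simpa using tendsto_one_div_add_atTop_nhds_zero_nat.const_mul y
  simpa [ratio_eq] using error_tendsto.const_add x

lemma tendsto_lucasU_add_div (hP : x + y = P) (hQ : x * y = Q) (hx : 0 < x) (hy : 0 ≤ y)
    (hyx : y ≤ x) (k : ℕ) :
    Tendsto (fun n => lucasU P Q (n + k + 1) / lucasU P Q (n + 1)) atTop (𝓝 (x ^ k)) := by
  have hne (n : ℕ) := (lucasU_succ_pos hP hQ hx hy n).ne'
  induction k with
  | zero => simp [div_self (hne _)]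
  | succ k ih =>
    rw [pow_succ']
    refine (((tendsto_lucasU_succ_div hP hQ hx hy hyx).comp (tendsto_add_atTop_nat k)).mul
      ih).congr fun n => ?_
    exact div_mul_div_cancel₀ (hne (n + k))

end LucasLimit

section PathGreen

/-- The adjugate of `P - α A`, for `A` the adjacency matrix of the path on `n` vertices, with
vertices numbered from `1`. It is defined for all `p` and `q` because it vanishes for `p = 0` and
for `p = n + 1`, so that the rows of the two end vertices need no separate treatment. -/
def pathGreen {R : Type*} [CommRing R] (P α : R) (n p q : ℕ) : R :=
  α ^ (max p q - min p q) * lucasU P (α ^ 2) (min p q) * lucasU P (α ^ 2) (n + 1 - max p q)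

variable {R : Type*} [CommRing R] (P α : R) {n p q : ℕ}

lemma pathGreen_of_le (n : ℕ) (h : p ≤ q) :
    pathGreen P α n p q =
      α ^ (q - p) * lucasU P (α ^ 2) p * lucasU P (α ^ 2) (n + 1 - q) := by
  rw [pathGreen, max_eq_right h, min_eq_left h]

lemma pathGreen_of_ge (n : ℕ) (h : q ≤ p) :
    pathGreen P α n p q =
      α ^ (p - q) * lucasU P (α ^ 2) q * lucasU P (α ^ 2) (n + 1 - p) := by
  rw [pathGreen, max_eq_left h, min_eq_right h]

lemma pathGreen_zero_left (n q : ℕ) : pathGreen P α n 0 q = 0 := by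
  rw [pathGreen_of_le P α n q.zero_le, lucasU_zero, mul_zero, zero_mul]

lemma pathGreen_succ_left (n q : ℕ) : pathGreen P α n (n + 1) q = 0 := by
  rw [pathGreen, Nat.sub_eq_zero_of_le (le_max_left _ _), lucasU_zero, mul_zero]

lemma pathGreen_rec_of_lt (n : ℕ) (h : p + 1 < q) :
    P * pathGreen P α n (p + 1) q = α * (pathGreen P α n p q + pathGreen P α n (p + 2) q) := by
  obtain ⟨c, rfl⟩ : ∃ c, q = p + 2 + c := Nat.exists_eq_add_of_le h
  rw [pathGreen_of_le P α n (by omega), pathGreen_of_le P α n (by omega),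
    pathGreen_of_le P α n (by omega), show p + 2 + c - (p + 1) = c + 1 by omega,
    show p + 2 + c - p = c + 2 by omega, Nat.add_sub_cancel_left, lucasU_add_two]
  ring

lemma pathGreen_rec_of_gt (hq : q < p + 1) (hp : p + 1 ≤ n) :
    P * pathGreen P α n (p + 1) q = α * (pathGreen P α n p q + pathGreen P α n (p + 2) q) := by
  obtain ⟨c, rfl⟩ := Nat.exists_eq_add_of_le (Nat.lt_succ_iff.1 hq)
  obtain ⟨r, rfl⟩ := Nat.exists_eq_add_of_le hp
  rw [pathGreen_of_ge P α _ (by omega), pathGreen_of_ge P α _ (by omega),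
    pathGreen_of_ge P α _ (by omega), show q + c + 1 - q = c + 1 by omega,
    show q + c + 2 - q = c + 2 by omega, show q + c - q = c by omega,
    show q + c + 1 + r + 1 - (q + c) = r + 2 by omega,
    show q + c + 1 + r + 1 - (q + c + 1) = r + 1 by omega,
    show q + c + 1 + r + 1 - (q + c + 2) = r by omega, lucasU_add_two]
  ring

lemma pathGreen_rec_self (h : p + 1 ≤ n) :
    P * pathGreen P α n (p + 1) (p + 1) -
        α * (pathGreen P α n p (p + 1) + pathGreen P α n (p + 2) (p + 1)) =
      lucasU P (α ^ 2) (n + 1) := by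
  obtain ⟨r, rfl⟩ := Nat.exists_eq_add_of_le h
  rw [pathGreen_of_le P α _ le_rfl, pathGreen_of_le P α _ (by omega),
    pathGreen_of_ge P α _ (by omega), Nat.sub_self, show p + 1 - p = 1 by omega,
    show p + 2 - (p + 1) = 1 by omega, show p + 1 + r + 1 - (p + 1) = r + 1 by omega,
    show p + 1 + r + 1 - (p + 2) = r by omega, lucasU_add_add_one, lucasU_add_two]
  ring

end PathGreen

section PathMatrix

lemma pathAdj_mulVec_apply {n : ℕ} {f : ℕ → ℝ} (h₀ : f 0 = 0) (hn : f (n + 1) = 0) (a : Fin n) :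
    (pathAdj n *ᵥ fun k => f (k + 1)) a = f a + f (a + 2) := by
  have entry_eq (k : Fin n) : pathAdj n a k * f (k + 1) =
      (if (k : ℕ) + 1 = a then f (k + 1) else 0) +
        (if (k : ℕ) = a + 1 then f (k + 1) else 0) := by
    simp only [pathAdj]
    split_ifs <;> first | omega | simp
  simp only [Matrix.mulVec, dotProduct]
  rw [sum_congr rfl fun k _ => entry_eq k, sum_add_distrib]
  congr 1
  · rw [Fin.sum_univ_eq_sum_range (fun k => if k + 1 = (a : ℕ) then f (k + 1) else 0)]
    rcases a with ⟨_ | a, ha⟩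
    · simp [h₀]
    · simp [(Nat.lt_succ_self a).trans ha]
  · rw [Fin.sum_univ_eq_sum_range (fun k => if k = (a : ℕ) + 1 then f (k + 1) else 0),
      sum_ite_eq']
    refine ite_eq_left_iff.2 fun hlast => ?_
    rw [show (a : ℕ) + 2 = n + 1 by rw [mem_range] at hlast; omega, hn]

variable (P α : ℝ)

lemma smul_one_sub_smul_pathAdj_mul_pathGreen (n : ℕ) :
    (P • (1 : Matrix (Fin n) (Fin n) ℝ) - α • pathAdj n) *
        Matrix.of (fun a b : Fin n => pathGreen P α n (a + 1) (b + 1)) =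
      lucasU P (α ^ 2) (n + 1) • 1 := by
  ext a b
  have neighbours := pathAdj_mulVec_apply (f := fun p => pathGreen P α n p (b + 1))
    (pathGreen_zero_left P α n _) (pathGreen_succ_left P α n _) a
  simp only [Matrix.mulVec, dotProduct] at neighbours
  rw [Matrix.sub_mul, Matrix.smul_mul, Matrix.smul_mul, Matrix.one_mul]
  simp only [Matrix.sub_apply, Matrix.smul_apply, Matrix.mul_apply, Matrix.of_apply, neighbours,
    smul_eq_mul]
  rcases lt_trichotomy a b with hab | rfl | hab
  · rw [Matrix.one_apply_ne hab.ne, mul_zero, pathGreen_rec_of_lt P α n (by omega), sub_self]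
  · rw [Matrix.one_apply_eq, mul_one, pathGreen_rec_self P α (by omega)]
  · rw [Matrix.one_apply_ne hab.ne', mul_zero, pathGreen_rec_of_gt P α (by omega) (by omega),
      sub_self]

variable {P α}

lemma inv_smul_one_sub_smul_pathAdj_apply {n : ℕ} (h : lucasU P (α ^ 2) (n + 1) ≠ 0)
    (a b : Fin n) :
    (P • (1 : Matrix (Fin n) (Fin n) ℝ) - α • pathAdj n)⁻¹ a b =
      pathGreen P α n (a + 1) (b + 1) / lucasU P (α ^ 2) (n + 1) := by
  rw [Matrix.inv_eq_right_inv (B := (lucasU P (α ^ 2) (n + 1))⁻¹ •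
      Matrix.of fun a b : Fin n => pathGreen P α n (a + 1) (b + 1))]
  · rw [Matrix.smul_apply, Matrix.of_apply, smul_eq_mul, inv_mul_eq_div]
  · rw [Matrix.mul_smul, smul_one_sub_smul_pathAdj_mul_pathGreen, inv_smul_smul₀ h]

lemma tendsto_inv_smul_one_sub_smul_pathAdj {x y : ℝ} (hP : x + y = P) (hQ : x * y = α ^ 2)
    (hx : 0 < x) (hy : 0 ≤ y) (hyx : y ≤ x) {i j : ℕ} (hij : i ≤ j) :
    Tendsto
      (fun N => (P • (1 : Matrix (Fin (j + 1 + N)) (Fin (j + 1 + N)) ℝ) -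
        α • pathAdj (j + 1 + N))⁻¹ ⟨i, by omega⟩ ⟨j, by omega⟩)
      atTop (𝓝 (α ^ (j - i) * lucasU P (α ^ 2) (i + 1) * (x ^ (j + 1))⁻¹)) := by
  refine (((tendsto_lucasU_add_div hP hQ hx hy hyx (j + 1)).inv₀ (by positivity)).const_mul
    _).congr fun N => ?_
  rw [inv_smul_one_sub_smul_pathAdj_apply (lucasU_succ_pos hP hQ hx hy _).ne',
    pathGreen_of_le P α _ (by simpa using hij), inv_div, add_comm N (j + 1),
    Nat.add_sub_add_right, show j + 1 + N + 1 - (j + 1) = N + 1 by omega, mul_div_assoc]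

end PathMatrix

theorem stmt12_general (α : ℝ) (hα : |α| ≤ 1 / 2) (i j : ℕ) (hij : i ≤ j) (hi : 1 ≤ i) :
    Tendsto
        (fun N : ℕ =>
          (((1 : Matrix (Fin (j + N)) (Fin (j + N)) ℝ) - α • pathAdj (j + N))⁻¹)
            ⟨i - 1, by omega⟩ ⟨j - 1, by omega⟩)
        atTop
        (𝓝 (α ^ (j - i) * dpoly (i - 1) α * (2 / (1 + √(1 - 4 * α ^ 2))) ^ j)) ∧
      (i < j →
        Tendsto
          (fun N : ℕ =>
            (((1 : Matrix (Fin (j + N)) (Fin (j + N)) ℝ) - α • pathAdj (j + N))⁻¹ - 1)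
              ⟨i - 1, by omega⟩ ⟨j - 1, by omega⟩)
          atTop
          (𝓝 (α ^ (j - i) * dpoly (i - 1) α * (2 / (1 + √(1 - 4 * α ^ 2))) ^ j))) := by
  obtain ⟨i, rfl⟩ := Nat.exists_eq_add_of_le' hi
  obtain ⟨j, rfl⟩ := Nat.exists_eq_add_of_le' (hi.trans hij)
  have hsq : α ^ 2 ≤ (1 / 2) ^ 2 := sq_le_sq' (abs_le.1 hα).1 (abs_le.1 hα).2
  have hdisc : 0 ≤ 1 - 4 * α ^ 2 := by linarith
  have hs := Real.sqrt_nonneg (1 - 4 * α ^ 2)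
  have hs_le : √(1 - 4 * α ^ 2) ≤ 1 := Real.sqrt_le_one.2 (by linarith [sq_nonneg α])
  have hroots : (1 + √(1 - 4 * α ^ 2)) / 2 * ((1 - √(1 - 4 * α ^ 2)) / 2) = α ^ 2 := by
    linear_combination -Real.sq_sqrt hdisc / 4
  have hlim := tendsto_inv_smul_one_sub_smul_pathAdj (P := 1) (by ring) hroots (by linarith)
    (by linarith) (by linarith) (Nat.le_of_succ_le_succ hij)
  have hinv : ((1 + √(1 - 4 * α ^ 2)) / 2)⁻¹ = 2 / (1 + √(1 - 4 * α ^ 2)) := inv_div _ _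
  simp only [one_smul, ← dpoly_eq_lucasU, ← inv_pow, hinv, ← Nat.add_sub_add_right j 1 i] at hlim
  refine ⟨hlim, fun hlt => hlim.congr fun N => ?_⟩
  rw [Matrix.sub_apply, Matrix.one_apply_ne (by simpa using hlt.ne), sub_zero]
  rfl

theorem stmt12 (α : ℝ) (hα0 : 0 < α) (hα1 : α < 1 / 2)
    (i j : ℕ) (hi : 1 ≤ i) (hij : i ≤ j) :
    Filter.Tendsto
        (fun N : ℕ =>
          (((1 : Matrix (Fin (j + N)) (Fin (j + N)) ℝ) - α • pathAdj (j + N))⁻¹)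
            ⟨i - 1, by omega⟩ ⟨j - 1, by omega⟩)
        Filter.atTop
        (nhds (α ^ (j - i) * dpoly (i - 1) α *
          (2 / (1 + Real.sqrt (1 - 4 * α ^ 2))) ^ j)) ∧
      (i < j →
        Filter.Tendsto
          (fun N : ℕ =>
            (((1 : Matrix (Fin (j + N)) (Fin (j + N)) ℝ) - α • pathAdj (j + N))⁻¹ - 1)
              ⟨i - 1, by omega⟩ ⟨j - 1, by omega⟩)
          Filter.atTop
          (nhds (α ^ (j - i) * dpoly (i - 1) α *
            (2 / (1 + Real.sqrt (1 - 4 * α ^ 2))) ^ j))) :=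
  stmt12_general α (abs_le.2 ⟨by linarith, hα1.le⟩) i j hij hi
end

section
/- Fix a real α with 0 < α < 1/2 and an integer m ≥ 1, and set β = 2/(1 + √(1 − 4α²)). Then, as n → ∞ (over n ≥ 4m + 1), the Katz similarity index K_{C_n}(α)_{1,1+2m} between vertex 1 and vertex 1+2m of the cycle C_n converges to (α^{2m}/(1 − 4α²))·β^{2m−2}·(1 − α⁴·β⁴). -/
/-!
With `β = 2 / (1 + √(1 - 4 α²))`, the number `t = α β` is the root of modulus less than one of
`α (1 + t²) = t`, so `k ↦ tᵏ` and `k ↦ t⁻ᵏ` solve the recurrence `x k = α (x (k - 1) + x (k + 1))`.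
On the cycle of length `n` their combination `tᵏ + tⁿ⁻ᵏ` is well defined modulo `n` and violates
this recurrence only at `k = 0`; up to normalization, the circulant matrix it generates is therefore
`(1 - α A)⁻¹`. As `n → ∞` the term `tⁿ⁻ᵏ` vanishes and the normalizing factor tends to
`(1 + t²) / (1 - t²) = 1 / √(1 - 4 α²)`.
-/

open Filter Matrix Topology

theorem circulant_single_one_mulVec {G R : Type*} [AddCommGroup G] [Fintype G] [DecidableEq G]
    [NonAssocSemiring R] (a : G) (v : G → R) :
    circulant (Pi.single a 1) *ᵥ v = fun d => v (d - a) := by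
  ext d
  simp [mulVec, dotProduct, Pi.single_apply, sub_eq_iff_comm]

section CycleAdj

variable {n : ℕ} [NeZero n]

theorem cycleAdj_eq_circulant (hn : 3 ≤ n) :
    cycleAdj n = circulant (Pi.single 1 1 + Pi.single (-1) 1) := by
  obtain ⟨n, rfl⟩ := Nat.exists_eq_add_of_le' hn
  ext i j
  have hmod_iff (a b : Fin (n + 3)) : (a.val + 1) % (n + 3) = b.val ↔ b - a = 1 := by
    rw [sub_eq_iff_eq_add', Fin.ext_iff, Fin.val_add, Fin.val_one, eq_comm]
  have one_ne_neg_one : (1 : Fin (n + 3)) ≠ -1 := by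
    simp [Fin.ext_iff, Fin.coe_neg_one]
  have hneg : j - i = 1 ↔ i - j = -1 := by rw [← neg_sub i j, neg_eq_iff_eq_neg]
  simp only [cycleAdj, hmod_iff, hneg, circulant_apply, Pi.add_apply, Pi.single_apply]
  grind

theorem cycleAdj_mul_circulant (hn : 3 ≤ n) (v : Fin n → ℝ) :
    cycleAdj n * circulant v = circulant fun d => v (d - 1) + v (d + 1) := by
  rw [cycleAdj_eq_circulant hn, Fin.circulant_mul]
  congr 1
  ext d
  simp only [circulant_add, add_mulVec, Pi.add_apply, circulant_single_one_mulVec, sub_neg_eq_add]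

end CycleAdj

section Wave

variable {R : Type*}

/-- The sum `tᵈ + tⁿ⁻ᵈ` of the two geometric waves issued from the vertex `0` of the `n`-cycle and
running around it in opposite directions. -/
def cycleWave [Semiring R] (n : ℕ) (t : R) (d : Fin n) : R :=
  t ^ d.val + t ^ (n - d.val)

theorem cycleWave_neg [Semiring R] {n : ℕ} [NeZero n] (t : R) (d : Fin n) :
    cycleWave n t (-d) = cycleWave n t d := by
  by_cases hd : d = 0
  · rw [hd, neg_zero]
  · simp only [cycleWave, Fin.val_neg, if_neg hd, Nat.sub_sub_self d.isLt.le, add_comm]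

-- No exception is needed at `d = n - 1`: going around the cycle exchanges the two summands.
theorem cycleWave_add_one [Semiring R] {n : ℕ} [NeZero n] (t : R) (d : Fin n) :
    cycleWave n t (d + 1) = t ^ (d.val + 1) + t ^ (n - (d.val + 1)) := by
  obtain ⟨n, rfl⟩ := Nat.exists_eq_succ_of_ne_zero (NeZero.ne n)
  by_cases hd : d = Fin.last n
  · simp [hd, cycleWave, add_comm]
  · simp [cycleWave, Fin.val_add_one, hd]

theorem cycleWave_sub_one_of_ne_zero [Semiring R] {n : ℕ} [NeZero n] (t : R) {d : Fin n}
    (hd : d ≠ 0) :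
    cycleWave n t (d - 1) = t ^ (d.val - 1) + t ^ (n - (d.val - 1)) := by
  rw [cycleWave, Fin.val_sub_one_of_ne_zero hd]

theorem one_add_sq_mul_cycleWave_sub [CommRing R] {n : ℕ} [NeZero n] (t : R) (d : Fin n) :
    (1 + t ^ 2) * cycleWave n t d - t * (cycleWave n t (d - 1) + cycleWave n t (d + 1)) =
      (1 - t ^ 2) * (1 - t ^ n) * (Pi.single 0 1 : Fin n → R) d := by
  by_cases hd : d = 0
  · have hone : cycleWave n t 1 = t + t ^ (n - 1) := by simpa using cycleWave_add_one t (0 : Fin n)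
    have hpow : t ^ n = t * t ^ (n - 1) := (mul_pow_sub_one (NeZero.ne n) t).symm
    rw [hd, zero_sub, zero_add, cycleWave_neg, hone, cycleWave, Fin.val_zero, Nat.sub_zero,
      pow_zero, Pi.single_eq_same, hpow]
    ring
  · rw [cycleWave_add_one, cycleWave_sub_one_of_ne_zero t hd, Pi.single_eq_of_ne hd, cycleWave,
      mul_zero]
    obtain ⟨k, hk⟩ := Nat.exists_eq_add_one_of_ne_zero (Fin.val_ne_zero_iff.mpr hd)
    obtain ⟨l, hl⟩ := Nat.exists_eq_add_of_lt d.isLt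
    have hprev : n - (d.val - 1) = l + 2 := by omega
    have hcurr : n - d.val = l + 1 := by omega
    have hnext : n - (d.val + 1) = l := by omega
    rw [hprev, hcurr, hnext, hk, Nat.add_sub_cancel]
    ring

end Wave

theorem inv_one_sub_smul_cycleAdj {n : ℕ} (hn : 3 ≤ n) {α t : ℝ} (hα : α * (1 + t ^ 2) = t)
    (ht : t ^ 2 ≠ 1) (htn : t ^ n ≠ 1) :
    (1 - α • cycleAdj n)⁻¹ =
      circulant (((1 + t ^ 2) / ((1 - t ^ 2) * (1 - t ^ n))) • cycleWave n t) := by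
  have : NeZero n := ⟨by omega⟩
  have ht' : 1 - t ^ 2 ≠ 0 := sub_ne_zero.mpr ht.symm
  have htn' : 1 - t ^ n ≠ 0 := sub_ne_zero.mpr htn.symm
  refine inv_eq_right_inv ?_
  rw [sub_mul, one_mul, smul_mul, cycleAdj_mul_circulant hn, ← circulant_smul, ← circulant_sub,
    ← circulant_single_one]
  congr 1
  ext d
  have hwave := one_add_sq_mul_cycleWave_sub t d
  simp only [Pi.sub_apply, Pi.smul_apply, smul_eq_mul]
  field_simp
  linear_combination hwave - (cycleWave n t (d - 1) + cycleWave n t (d + 1)) * hα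

theorem inv_one_sub_smul_cycleAdj_apply {n : ℕ} (hn : 3 ≤ n) {α t : ℝ}
    (hα : α * (1 + t ^ 2) = t) (ht : |t| < 1) (u v : Fin n) :
    (1 - α • cycleAdj n)⁻¹ u v =
      (1 + t ^ 2) / ((1 - t ^ 2) * (1 - t ^ n)) * (t ^ (v - u).val + t ^ (n - (v - u).val)) := by
  have : NeZero n := ⟨by omega⟩
  have pow_ne_one {k : ℕ} (hk : k ≠ 0) : t ^ k ≠ 1 := fun h =>
    (pow_lt_one₀ (abs_nonneg t) ht hk).ne (by rw [← abs_pow, h, abs_one])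
  rw [inv_one_sub_smul_cycleAdj hn hα (pow_ne_one two_ne_zero) (pow_ne_one (by omega)),
    circulant_apply, Pi.smul_apply, smul_eq_mul, ← neg_sub v u, cycleWave_neg, cycleWave]

theorem tendsto_inv_one_sub_smul_cycleAdj {ι : Type*} {l : Filter ι} {n : ι → ℕ}
    (hn : Tendsto n l atTop) {u v : ∀ x, Fin (n x)} {k : ℕ} (huv : ∀ x, (v x - u x).val = k)
    {α t : ℝ} (hα : α * (1 + t ^ 2) = t) (ht : |t| < 1) :
    Tendsto (fun x => (1 - α • cycleAdj (n x))⁻¹ (u x) (v x)) l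
      (𝓝 ((1 + t ^ 2) / (1 - t ^ 2) * t ^ k)) := by
  have hpow : Tendsto (t ^ ·) atTop (𝓝 0) := tendsto_pow_atTop_nhds_zero_of_abs_lt_one ht
  have hpow_n : Tendsto (fun x => t ^ n x) l (𝓝 0) := hpow.comp hn
  have hpow_n_sub : Tendsto (fun x => t ^ (n x - k)) l (𝓝 0) :=
    hpow.comp ((tendsto_sub_atTop_nat k).comp hn)
  have hden : (1 - t ^ 2) * (1 - 0) ≠ 0 := by
    rw [sub_zero, mul_one]
    exact (sub_pos.mpr ((sq_lt_one_iff_abs_lt_one t).mpr ht)).ne'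
  have hentry : (fun x => (1 - α • cycleAdj (n x))⁻¹ (u x) (v x)) =ᶠ[l] fun x =>
      (1 + t ^ 2) / ((1 - t ^ 2) * (1 - t ^ n x)) * (t ^ k + t ^ (n x - k)) := by
    filter_upwards [hn.eventually_ge_atTop 3] with x hx
    rw [inv_one_sub_smul_cycleAdj_apply hx hα ht, huv]
  refine Tendsto.congr' hentry.symm ?_
  simpa only [sub_zero, mul_one, add_zero, Pi.div_apply] using
    (tendsto_const_nhds.div ((hpow_n.const_sub 1).const_mul (1 - t ^ 2)) hden).mul
      (hpow_n_sub.const_add (t ^ k))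

section KatzBeta

/-- The constant `β` of the limit: the value at `α²` of the generating function of the Catalan
numbers, that is, the solution of `β = 1 + α² β²` that tends to `1` as `α → 0`. -/
noncomputable def katzBeta (α : ℝ) : ℝ :=
  2 / (1 + √(1 - 4 * α ^ 2))

variable {α : ℝ}

theorem katzBeta_pos (α : ℝ) : 0 < katzBeta α := by
  unfold katzBeta
  positivity

theorem katzBeta_mul_one_add_sqrt (α : ℝ) : katzBeta α * (1 + √(1 - 4 * α ^ 2)) = 2 :=
  div_mul_cancel₀ _ (by positivity)

theorem one_add_sq_mul_katzBeta (hα : 4 * α ^ 2 ≤ 1) : 1 + (α * katzBeta α) ^ 2 = katzBeta α := by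
  have hsqrt : √(1 - 4 * α ^ 2) ^ 2 = 1 - 4 * α ^ 2 := Real.sq_sqrt (sub_nonneg.mpr hα)
  have hadd := katzBeta_mul_one_add_sqrt α
  have hsub : katzBeta α * (1 - √(1 - 4 * α ^ 2)) = 2 * katzBeta α - 2 := by
    linear_combination -hadd
  calc 1 + (α * katzBeta α) ^ 2
      = 1 + katzBeta α * (1 + √(1 - 4 * α ^ 2)) * (katzBeta α * (1 - √(1 - 4 * α ^ 2))) / 4 := by
        linear_combination katzBeta α ^ 2 / 4 * hsqrt
    _ = katzBeta α := by rw [hadd, hsub]; ring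

theorem one_sub_sq_mul_katzBeta (hα : 4 * α ^ 2 ≤ 1) :
    1 - (α * katzBeta α) ^ 2 = √(1 - 4 * α ^ 2) * katzBeta α := by
  linear_combination -katzBeta_mul_one_add_sqrt α - one_add_sq_mul_katzBeta hα

theorem abs_mul_katzBeta_lt_one (hα : 4 * α ^ 2 < 1) : |α * katzBeta α| < 1 := by
  rw [← sq_lt_one_iff_abs_lt_one, ← sub_pos, one_sub_sq_mul_katzBeta hα.le]
  exact mul_pos (Real.sqrt_pos.mpr (sub_pos.mpr hα)) (katzBeta_pos α)

theorem one_add_sq_div_one_sub_sq_mul_katzBeta (hα : 4 * α ^ 2 ≤ 1) :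
    (1 + (α * katzBeta α) ^ 2) / (1 - (α * katzBeta α) ^ 2) = 1 / √(1 - 4 * α ^ 2) := by
  rw [one_add_sq_mul_katzBeta hα, one_sub_sq_mul_katzBeta hα,
    div_mul_cancel_right₀ (katzBeta_pos α).ne', one_div]

theorem mul_katzBeta_pow_div_sqrt (hα : 4 * α ^ 2 < 1) {k : ℕ} (hk : 2 ≤ k) :
    (α * katzBeta α) ^ k / √(1 - 4 * α ^ 2) =
      α ^ k / (1 - 4 * α ^ 2) * katzBeta α ^ (k - 2) * (1 - α ^ 4 * katzBeta α ^ 4) := by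
  have hsqrt : √(1 - 4 * α ^ 2) ^ 2 = 1 - 4 * α ^ 2 := Real.sq_sqrt (sub_pos.mpr hα).le
  have hsqrt_pos : 0 < √(1 - 4 * α ^ 2) := Real.sqrt_pos.mpr (sub_pos.mpr hα)
  have hfactor : 1 - α ^ 4 * katzBeta α ^ 4 = √(1 - 4 * α ^ 2) * katzBeta α ^ 2 := by
    calc 1 - α ^ 4 * katzBeta α ^ 4
        = (1 - (α * katzBeta α) ^ 2) * (1 + (α * katzBeta α) ^ 2) := by ring
      _ = √(1 - 4 * α ^ 2) * katzBeta α ^ 2 := by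
        rw [one_sub_sq_mul_katzBeta hα.le, one_add_sq_mul_katzBeta hα.le]; ring
  rw [hfactor, mul_pow, ← pow_sub_mul_pow (katzBeta α) hk]
  generalize √(1 - 4 * α ^ 2) = s at *
  rw [← hsqrt]
  field_simp

end KatzBeta

theorem stmt13_general {ι : Type*} {l : Filter ι} {n : ι → ℕ} (hn : Tendsto n l atTop)
    {u v : ∀ x, Fin (n x)} {k : ℕ} (hk : k ≠ 0) (huv : ∀ x, (v x - u x).val = k)
    {α : ℝ} (hα : 4 * α ^ 2 < 1) :
    Tendsto (fun x => ((1 - α • cycleAdj (n x))⁻¹ - 1) (u x) (v x)) l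
      (𝓝 ((α * katzBeta α) ^ k / √(1 - 4 * α ^ 2))) := by
  have hne (x : ι) : u x ≠ v x := by
    intro h
    have : NeZero (n x) := ⟨(u x).pos.ne'⟩
    exact hk (by rw [← huv x, h, sub_self, Fin.val_zero])
  have hroot : α * (1 + (α * katzBeta α) ^ 2) = α * katzBeta α := by
    rw [one_add_sq_mul_katzBeta hα.le]
  have hlim := tendsto_inv_one_sub_smul_cycleAdj hn huv hroot (abs_mul_katzBeta_lt_one hα)
  rw [one_add_sq_div_one_sub_sq_mul_katzBeta hα.le, one_div_mul_eq_div] at hlim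
  simpa only [Matrix.sub_apply, one_apply_ne (hne _), sub_zero] using hlim

theorem stmt13 (α : ℝ) (hα0 : 0 < α) (hα1 : α < 1 / 2) (m : ℕ) (hm : 1 ≤ m)
    (β : ℝ) (hβ : β = 2 / (1 + Real.sqrt (1 - 4 * α ^ 2))) :
    Filter.Tendsto
      (fun N : ℕ =>
        (((1 : Matrix (Fin (4 * m + 1 + N)) (Fin (4 * m + 1 + N)) ℝ)
            - α • cycleAdj (4 * m + 1 + N))⁻¹ - 1)
          ⟨0, by omega⟩ ⟨2 * m, by omega⟩)
      Filter.atTop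
      (nhds ((α ^ (2 * m) / (1 - 4 * α ^ 2)) * β ^ (2 * m - 2) * (1 - α ^ 4 * β ^ 4))) := by
  obtain rfl : β = katzBeta α := hβ
  rw [← mul_katzBeta_pow_div_sqrt (by nlinarith) (by omega)]
  exact stmt13_general (tendsto_atTop_mono (fun N => Nat.le_add_left N _) tendsto_id)
    (by omega) (fun N => by simp) (by nlinarith)
end

section
/- For an integer n ≥ 2 and real α define D_n(α) = d_{n−1}(α) − 2α^n − 2α²·d_{n−2}(α). Then for every real α and every integer ℓ ≥ 1: D_{2ℓ}(α) = (1 − 4α²)·d_{ℓ−1}(α)², and D_{2ℓ+1}(α) = (1 − 2α)·(α^{2ℓ} + (1 + 2α)·d_ℓ(α)·d_{ℓ−1}(α)). -/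
/-- `Dpoly n α = d_{n-1}(α) - 2α^n - 2α² d_{n-2}(α)`. -/
noncomputable def Dpoly (n : ℕ) (α : ℝ) : ℝ :=
  dpoly (n - 1) α - 2 * α ^ n - 2 * α ^ 2 * dpoly (n - 2) α

/-!
`d_n(α)` and `D_n(α) + 2α^n` are the values at `1` of the Dickson polynomials `E_n` and `L_n` of the
second and first kind with parameter `α²`. If `X = y + z` and `b = yz`, the Dickson polynomials with
parameter `b` are `L_n = y^n + z^n` and `E_n = (y^(n+1) - z^(n+1)) / (y - z)`, and `X² - 4b` is
`(y - z)²`. The theorem is therefore a form of the factorizations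
`L_{2n} - 2b^n = (y^n - z^n)²` and `L_{2n+1} - X b^n = (y^(n+1) - z^(n+1)) (y^n - z^n)`. They
follow, without adjoining `y` and `z`, from an addition formula and a Cassini identity.
-/

section Dickson

open Polynomial Finset.HasAntidiagonal

variable {R : Type*} [CommRing R]

lemma dickson_second_kind_zero (b : R) : dickson 2 b 0 = 1 := by
  rw [dickson_zero]
  norm_num

lemma dickson_second_kind_eq_sum_antidiagonal (b : R) (n : ℕ) :
    dickson 2 b n = ∑ p ∈ antidiagonal n,
      (p.1.choose p.2 : R[X]) * (-C b) ^ p.2 * X ^ (p.1 - p.2) := by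
  induction n using Nat.twoStepInduction with
  | zero => simp [-dickson_zero, dickson_second_kind_zero]
  | one => simp [Finset.Nat.antidiagonal_succ]
  | more n ih₀ ih₁ =>
    have pascal (i j : ℕ) :
        ((i + 1).choose (j + 1) : R[X]) * (-C b) ^ (j + 1) * X ^ (i + 1 - (j + 1)) =
          X * ((i.choose (j + 1) : R[X]) * (-C b) ^ (j + 1) * X ^ (i - (j + 1))) -
            C b * ((i.choose j : R[X]) * (-C b) ^ j * X ^ (i - j)) := by
      rw [Nat.choose_succ_succ, Nat.add_sub_add_right]
      -- The truncated exponent `i - (j + 1)` is off only where `i.choose (j + 1)` vanishes.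
      obtain h | h := lt_or_ge i (j + 1)
      · rw [Nat.choose_eq_zero_of_lt h]
        push_cast
        ring
      · rw [show i - j = i - (j + 1) + 1 by lia]
        push_cast
        ring
    rw [dickson_add_two, ih₀, ih₁, Finset.Nat.sum_antidiagonal_succ',
      Finset.Nat.sum_antidiagonal_succ', Finset.Nat.sum_antidiagonal_succ]
    simp only [pascal, Finset.sum_sub_distrib, ← Finset.mul_sum, Nat.choose_zero_right,
      Nat.choose_zero_succ, Nat.cast_zero, Nat.cast_one, Nat.sub_zero]
    ring

lemma dickson_add_add_one (k : ℕ) (b : R) (m n : ℕ) :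
    dickson k b (m + n + 1) =
      dickson 2 b m * dickson k b (n + 1) + dickson 2 b (m + 1) * dickson k b n -
        X * dickson 2 b m * dickson k b n := by
  induction m generalizing n with
  | zero =>
    rw [zero_add, zero_add, dickson_second_kind_zero, dickson_one]
    ring
  | succ m ih =>
    rw [add_right_comm m 1 n, add_assoc m n 1, ih (n + 1), dickson_add_two k b n,
      dickson_add_two 2 b m]
    ring

lemma dickson_second_kind_cassini (b : R) (n : ℕ) :
    dickson 2 b (n + 1) ^ 2 - X * dickson 2 b (n + 1) * dickson 2 b n +
      C b * dickson 2 b n ^ 2 = C b ^ (n + 1) := by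
  induction n with
  | zero =>
    rw [zero_add, dickson_second_kind_zero, dickson_one]
    ring
  | succ n ih =>
    rw [dickson_add_two, pow_succ (C b), ← ih]
    ring

lemma dickson_first_kind_succ (b : R) (n : ℕ) :
    dickson 1 b (n + 1) = 2 * dickson 2 b (n + 1) - X * dickson 2 b n := by
  have h := dickson_add_add_one 1 b n 0
  rw [add_zero, zero_add, dickson_one, dickson_zero] at h
  push_cast at h
  linear_combination h

lemma dickson_first_kind_add_two (b : R) (n : ℕ) :
    dickson 1 b (n + 2) = X * dickson 2 b (n + 1) - 2 * C b * dickson 2 b n := by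
  rw [dickson_first_kind_succ, dickson_add_two 2]
  ring

lemma dickson_second_kind_two_mul_add_one (b : R) (n : ℕ) :
    dickson 2 b (2 * n + 1) =
      2 * dickson 2 b n * dickson 2 b (n + 1) - X * dickson 2 b n ^ 2 := by
  rw [two_mul, dickson_add_add_one]
  ring

lemma dickson_second_kind_two_mul_add_two (b : R) (n : ℕ) :
    dickson 2 b (2 * n + 2) = dickson 2 b (n + 1) ^ 2 - C b * dickson 2 b n ^ 2 := by
  rw [show 2 * n + 2 = n + (n + 1) + 1 by ring, dickson_add_add_one, dickson_add_two]
  ring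

lemma dickson_first_kind_two_mul_sub (b : R) (n : ℕ) :
    dickson 1 b (2 * (n + 1)) - 2 * C b ^ (n + 1) = (X ^ 2 - 4 * C b) * dickson 2 b n ^ 2 := by
  rw [mul_add_one, dickson_first_kind_succ, dickson_second_kind_two_mul_add_two,
    dickson_second_kind_two_mul_add_one, ← dickson_second_kind_cassini]
  ring

lemma dickson_first_kind_two_mul_add_one_sub (b : R) (n : ℕ) :
    dickson 1 b (2 * (n + 1) + 1) - X * C b ^ (n + 1) =
      (X ^ 2 - 4 * C b) * (dickson 2 b (n + 1) * dickson 2 b n) := by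
  rw [mul_add_one, dickson_first_kind_add_two, dickson_second_kind_two_mul_add_two,
    dickson_second_kind_two_mul_add_one, ← dickson_second_kind_cassini]
  ring

lemma dpoly_eq_eval_dickson (n : ℕ) (α : ℝ) : dpoly n α = (dickson 2 (α ^ 2) n).eval 1 := by
  have h_term (m : ℕ) : (-1 : ℝ) ^ m * (n - m).choose m * α ^ (2 * m) =
      (n - m).choose m * (-α ^ 2) ^ m := by
    rw [neg_pow, pow_mul]
    ring
  have h_vanish : ∀ m ∈ Finset.range (n + 1), m ∉ Finset.range (n / 2 + 1) →
      ((n - m).choose m : ℝ) * (-α ^ 2) ^ m = 0 := by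
    intro m _ hm
    rw [Finset.mem_range] at hm
    rw [Nat.choose_eq_zero_of_lt (by lia), Nat.cast_zero, zero_mul]
  calc dpoly n α = ∑ m ∈ Finset.range (n / 2 + 1), ((n - m).choose m : ℝ) * (-α ^ 2) ^ m :=
        Finset.sum_congr rfl fun m _ ↦ h_term m
    _ = ∑ m ∈ Finset.range (n + 1), ((n - m).choose m : ℝ) * (-α ^ 2) ^ m :=
        Finset.sum_subset (Finset.range_mono (by lia)) h_vanish
    _ = ∑ p ∈ antidiagonal n, (p.1.choose p.2 : ℝ) * (-α ^ 2) ^ p.2 := by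
        rw [← Finset.Nat.sum_antidiagonal_swap, Finset.Nat.sum_antidiagonal_eq_sum_range_succ_mk]
        rfl
    _ = (dickson 2 (α ^ 2) n).eval 1 := by
        simp [dickson_second_kind_eq_sum_antidiagonal, eval_finsetSum]

lemma Dpoly_eq_eval_dickson {n : ℕ} (hn : 2 ≤ n) (α : ℝ) :
    Dpoly n α = (dickson 1 (α ^ 2) n - 2 * C α ^ n).eval 1 := by
  obtain ⟨n, rfl⟩ := Nat.exists_eq_add_of_le' hn
  rw [Dpoly, Nat.add_sub_cancel, show n + 2 - 1 = n + 1 from rfl, dpoly_eq_eval_dickson,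
    dpoly_eq_eval_dickson, dickson_first_kind_add_two]
  simp only [eval_sub, eval_mul, eval_pow, eval_X, eval_C, eval_ofNat]
  ring

theorem stmt14_general (a : R) (n : ℕ) :
    dickson 1 (a ^ 2) (2 * (n + 1)) - 2 * C a ^ (2 * (n + 1)) =
        (X ^ 2 - 4 * C a ^ 2) * dickson 2 (a ^ 2) n ^ 2 ∧
      dickson 1 (a ^ 2) (2 * (n + 1) + 1) - 2 * C a ^ (2 * (n + 1) + 1) =
        (X - 2 * C a) * (C a ^ (2 * (n + 1)) +
          (X + 2 * C a) * dickson 2 (a ^ 2) (n + 1) * dickson 2 (a ^ 2) n) := by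
  have h_even := dickson_first_kind_two_mul_sub (a ^ 2) n
  have h_odd := dickson_first_kind_two_mul_add_one_sub (a ^ 2) n
  rw [C_pow] at h_even h_odd
  constructor
  · linear_combination h_even
  · linear_combination h_odd

end Dickson

theorem stmt14 (α : ℝ) (ℓ : ℕ) (hℓ : 1 ≤ ℓ) :
    Dpoly (2 * ℓ) α = (1 - 4 * α ^ 2) * (dpoly (ℓ - 1) α) ^ 2 ∧
      Dpoly (2 * ℓ + 1) α
        = (1 - 2 * α) * (α ^ (2 * ℓ) + (1 + 2 * α) * dpoly ℓ α * dpoly (ℓ - 1) α) := by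
  obtain ⟨n, rfl⟩ := Nat.exists_eq_add_of_le' hℓ
  rw [Dpoly_eq_eval_dickson (by lia), Dpoly_eq_eval_dickson (by lia), (stmt14_general α n).1,
    (stmt14_general α n).2]
  simp [dpoly_eq_eval_dickson]
end

section
/- Let n > 4 and let α be real with 0 < α < 1/2. Then for all i, j, i', j' ∈ {1,…,n} with i ≠ j and i' ≠ j', one has K_{C_n}(α)_{i,j} < K_{C_n}(α)_{i',j'} if and only if min(|i−j|, n−|i−j|) > min(|i'−j'|, n−|i'−j'|). (Since the graph distance in C_n between vertices i and j is min(|i−j|, n−|i−j|) and the effective resistance is a strictly increasing function of this distance on the relevant range, the Katz similarity index, the resistance distance, and the graph distance rank all node pairs of the cycle in the same order.) -/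
/-!
With `α = r / (1 + r ^ 2)` and `0 < r < 1`, the resolvent `(1 - α A)⁻¹` of the cycle is a positive
multiple of `r ^ d + r ^ (n - d)`, where `d` is the distance from `j` to `i` along the orientation
of the cycle: `r ^ d` and `r ^ (n - d)` both solve `x d = α (x (d - 1) + x (d + 1))`, and their sum
is the solution that closes up around the cycle. It is unchanged under `d ↦ n - d` and strictly
decreasing for `d ≤ n / 2`, so it orders the pairs of vertices by decreasing graph distance.
-/

open Matrix

/-- The Green's function of the cycle graph on `n` vertices, up to a constant factor, between
vertices at distance `d ≤ n` along the orientation. It is defined on `ℕ` rather than `Fin n`, so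
that its recurrence involves no wrap-around. -/
def cycleKernel {R : Type*} [Semiring R] (n : ℕ) (r : R) (d : ℕ) : R :=
  r ^ d + r ^ (n - d)

/-- The graph distance between two vertices of the cycle graph on `n` vertices. -/
def cycleDist {n : ℕ} (i j : Fin n) : ℕ :=
  min ((i : ℤ) - j).natAbs (n - ((i : ℤ) - j).natAbs)

section Kernel

variable {R : Type*} {n d : ℕ}

theorem cycleKernel_sub [Semiring R] (r : R) (hd : d ≤ n) :
    cycleKernel n r (n - d) = cycleKernel n r d := by
  rw [cycleKernel, cycleKernel, Nat.sub_sub_self hd, add_comm]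

theorem cycleKernel_min_sub [Semiring R] (r : R) (hd : d ≤ n) :
    cycleKernel n r (min d (n - d)) = cycleKernel n r d := by
  rcases min_choice d (n - d) with h | h
  · rw [h]
  · rw [h, cycleKernel_sub r hd]

theorem cycleKernel_recurrence [CommSemiring R] (r : R) (hd : d + 2 ≤ n) :
    r * (cycleKernel n r (d + 2) + cycleKernel n r d) =
      (1 + r ^ 2) * cycleKernel n r (d + 1) := by
  obtain ⟨m, rfl⟩ := Nat.exists_eq_add_of_le' hd
  simp only [cycleKernel, show m + (d + 2) - (d + 2) = m by omega,
    show m + (d + 2) - d = m + 2 by omega, show m + (d + 2) - (d + 1) = m + 1 by omega]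
  ring

theorem cycleKernel_boundary [CommRing R] [NeZero n] (r : R) :
    (1 + r ^ 2) * cycleKernel n r 0 - r * (cycleKernel n r 1 + cycleKernel n r 1) =
      (1 - r ^ 2) * (1 - r ^ n) := by
  obtain ⟨m, rfl⟩ := Nat.exists_eq_succ_of_ne_zero (NeZero.ne n)
  simp only [cycleKernel, Nat.sub_zero, Nat.succ_eq_add_one, Nat.add_sub_cancel]
  ring

theorem strictAntiOn_cycleKernel [CommRing R] [LinearOrder R] [IsStrictOrderedRing R] {r : R}
    (h0 : 0 < r) (h1 : r < 1) : StrictAntiOn (cycleKernel n r) {d | 2 * d ≤ n} := by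
  intro a _ b (hb : 2 * b ≤ n) hab
  obtain ⟨m, rfl⟩ : ∃ m, n = a + b + m := Nat.exists_eq_add_of_le (by omega)
  have hpow : r ^ b < r ^ a := pow_lt_pow_right_of_lt_one₀ h0 h1 hab
  have hm : r ^ m < 1 := pow_lt_one₀ h0.le h1 (by omega)
  have hfactor : cycleKernel (a + b + m) r a - cycleKernel (a + b + m) r b =
      (r ^ a - r ^ b) * (1 - r ^ m) := by
    simp only [cycleKernel, show a + b + m - a = b + m by omega,
      show a + b + m - b = a + m by omega]
    ring
  exact sub_pos.1 (hfactor ▸ mul_pos (sub_pos.2 hpow) (sub_pos.2 hm))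

end Kernel

section Vertices

variable {R : Type*} {n : ℕ}

theorem two_mul_cycleDist_le (i j : Fin n) : 2 * cycleDist i j ≤ n := by
  rw [cycleDist]
  omega

theorem cycleDist_eq_min_val_sub (i j : Fin n) :
    cycleDist i j = min (i - j).val (n - (i - j).val) := by
  rw [cycleDist]
  rcases le_or_gt j i with h | h
  · rw [Fin.coe_sub_iff_le.2 h]
    omega
  · rw [Fin.coe_sub_iff_lt.2 h]
    omega

theorem cycleKernel_val_sub [Semiring R] (r : R) (i j : Fin n) :
    cycleKernel n r (i - j).val = cycleKernel n r (cycleDist i j) := by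
  rw [cycleDist_eq_min_val_sub, cycleKernel_min_sub r (i - j).isLt.le]

variable [NeZero n]

theorem cycleKernel_val_add_one [Semiring R] (r : R) (k : Fin n) :
    cycleKernel n r (k + 1).val = cycleKernel n r (k.val + 1) := by
  rcases (Nat.succ_le_of_lt k.isLt).lt_or_eq with h | h
  · rw [Fin.val_add_one_of_lt' h]
  · have hk : (k + 1).val = 0 := by
      rw [Fin.val_add, Fin.val_one', Nat.add_mod_mod, ← Nat.succ_eq_add_one, h, Nat.mod_self]
    rw [hk, ← Nat.succ_eq_add_one, h, ← cycleKernel_sub r le_rfl, Nat.sub_self]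

theorem cycleKernel_val_neg_one [Semiring R] (r : R) :
    cycleKernel n r (-1 : Fin n).val = cycleKernel n r 1 := by
  obtain ⟨m, rfl⟩ := Nat.exists_eq_succ_of_ne_zero (NeZero.ne n)
  rw [Fin.coe_neg_one, ← cycleKernel_sub r (Nat.succ_pos m), Nat.succ_sub_one]

theorem cycleKernel_val_resolvent [CommRing R] (r : R) (k : Fin n) :
    (1 + r ^ 2) * cycleKernel n r k.val -
        r * (cycleKernel n r (k + 1).val + cycleKernel n r (k - 1).val) =
      if k = 0 then (1 - r ^ 2) * (1 - r ^ n) else 0 := by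
  rw [cycleKernel_val_add_one]
  split_ifs with hk
  · rw [hk, zero_sub, cycleKernel_val_neg_one, Fin.val_zero, zero_add, cycleKernel_boundary]
  · obtain ⟨d, hd⟩ : ∃ d, k.val = d + 1 :=
      Nat.exists_eq_succ_of_ne_zero (Fin.val_ne_zero_iff.2 hk)
    rw [Fin.val_sub_one_of_ne_zero hk, hd, Nat.add_sub_cancel,
      cycleKernel_recurrence r (by omega), sub_self]

end Vertices

section Resolvent

variable {n : ℕ}

theorem cycleAdj_apply [NeZero n] (i j : Fin n) :
    cycleAdj n i j = if j = i + 1 ∨ j = i - 1 then 1 else 0 := by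
  have hsucc (a b : Fin n) : (a.val + 1) % n = b.val ↔ a + 1 = b := by
    rw [Fin.ext_iff, Fin.val_add, Fin.val_one', Nat.add_mod_mod]
  simp only [cycleAdj, hsucc, eq_sub_iff_add_eq, eq_comm (a := j) (b := i + 1)]

theorem cycleAdj_mul_apply [NeZero n] {m : Type*} (hn : 3 ≤ n) (M : Matrix (Fin n) m ℝ)
    (i : Fin n) (j : m) : (cycleAdj n * M) i j = M (i + 1) j + M (i - 1) j := by
  have hne : i + 1 ≠ i - 1 := by
    rw [Ne, eq_sub_iff_add_eq, add_assoc, add_eq_left, Fin.ext_iff, Fin.val_add, Fin.val_one',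
      Nat.mod_eq_of_lt (by omega : 1 < n), Nat.mod_eq_of_lt (by omega : 1 + 1 < n)]
    exact two_ne_zero
  simp only [mul_apply, cycleAdj_apply, ite_mul, one_mul, zero_mul]
  rw [← Finset.sum_filter, ← Finset.sum_pair (f := fun k => M k j) hne]
  congr 1
  ext k
  simp only [Finset.mem_filter_univ, Finset.mem_insert, Finset.mem_singleton]

theorem inv_one_sub_smul_cycleAdj_s15 [NeZero n] (hn : 3 ≤ n) {r : ℝ} (hr : |r| ≠ 1) :
    (1 - (r / (1 + r ^ 2)) • cycleAdj n)⁻¹ =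
      circulant fun k : Fin n =>
        (1 + r ^ 2) / ((1 - r ^ 2) * (1 - r ^ n)) * cycleKernel n r k.val := by
  have hpow {m : ℕ} (hm : m ≠ 0) : 1 - r ^ m ≠ 0 := by
    intro h
    have habs : |r| ^ m = 1 := by rw [← abs_pow, ← sub_eq_zero.1 h, abs_one]
    exact hr ((pow_eq_one_iff_of_nonneg (abs_nonneg r) hm).1 habs)
  have hsq : 1 - r ^ 2 ≠ 0 := hpow two_ne_zero
  have hrn : 1 - r ^ n ≠ 0 := hpow (NeZero.ne n)
  have hpos : 1 + r ^ 2 ≠ 0 := by positivity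
  refine inv_eq_right_inv ?_
  ext i j
  have hadd : i + 1 - j = i - j + 1 := add_sub_right_comm i 1 j
  have hsub : i - 1 - j = i - j - 1 := sub_right_comm i 1 j
  rw [sub_mul, one_mul, smul_mul, Matrix.sub_apply, Matrix.smul_apply, cycleAdj_mul_apply hn]
  simp only [circulant_apply, smul_eq_mul, hadd, hsub]
  calc
    _ = ((1 + r ^ 2) * cycleKernel n r (i - j).val - r * (cycleKernel n r (i - j + 1).val +
          cycleKernel n r (i - j - 1).val)) / ((1 - r ^ 2) * (1 - r ^ n)) := by
      field_simp
    _ = (1 : Matrix (Fin n) (Fin n) ℝ) i j := by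
      simp only [cycleKernel_val_resolvent, one_apply, sub_eq_zero, ite_div, zero_div,
        div_self (mul_ne_zero hsq hrn)]

theorem exists_div_one_add_sq_eq {α : ℝ} (hα0 : 0 < α) (hα1 : α < 1 / 2) :
    ∃ r : ℝ, 0 < r ∧ r < 1 ∧ r / (1 + r ^ 2) = α := by
  have hcont : Continuous fun r : ℝ => r / (1 + r ^ 2) :=
    continuous_id.div (by fun_prop) fun r => by positivity
  obtain ⟨r, ⟨h0, h1⟩, hr⟩ := intermediate_value_Ioo zero_le_one hcont.continuousOn
    (show α ∈ Set.Ioo _ _ by constructor <;> norm_num <;> linarith)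
  exact ⟨r, h0, h1, hr⟩

theorem inv_one_sub_smul_cycleAdj_lt_iff (hn : 3 ≤ n) {α : ℝ} (hα0 : 0 < α) (hα1 : α < 1 / 2)
    (i j i' j' : Fin n) :
    (1 - α • cycleAdj n)⁻¹ i j < (1 - α • cycleAdj n)⁻¹ i' j' ↔
      cycleDist i' j' < cycleDist i j := by
  have : NeZero n := ⟨by omega⟩
  obtain ⟨r, h0, h1, rfl⟩ := exists_div_one_add_sq_eq hα0 hα1
  have hr : |r| ≠ 1 := by rw [abs_of_pos h0]; exact h1.ne
  have hconst : 0 < (1 + r ^ 2) / ((1 - r ^ 2) * (1 - r ^ n)) :=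
    div_pos (by positivity) (mul_pos (sub_pos.2 (pow_lt_one₀ h0.le h1 two_ne_zero))
      (sub_pos.2 (pow_lt_one₀ h0.le h1 (NeZero.ne n))))
  rw [inv_one_sub_smul_cycleAdj_s15 hn hr, circulant_apply, circulant_apply,
    mul_lt_mul_iff_right₀ hconst, cycleKernel_val_sub, cycleKernel_val_sub]
  exact (strictAntiOn_cycleKernel h0 h1).lt_iff_gt (two_mul_cycleDist_le i j)
    (two_mul_cycleDist_le i' j')

end Resolvent

theorem stmt15_general {n : ℕ} (hn : 3 ≤ n) {α : ℝ} (hα0 : 0 < α) (hα1 : α < 1 / 2)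
    {i j i' j' : Fin n} (hij : i ≠ j) (hij' : i' ≠ j') :
    ((1 - α • cycleAdj n)⁻¹ - 1) i j < ((1 - α • cycleAdj n)⁻¹ - 1) i' j' ↔
      cycleDist i' j' < cycleDist i j := by
  rw [Matrix.sub_apply, Matrix.sub_apply, one_apply_ne hij, one_apply_ne hij', sub_zero, sub_zero,
    inv_one_sub_smul_cycleAdj_lt_iff hn hα0 hα1]

theorem stmt15 (n : ℕ) (hn : 4 < n) (α : ℝ) (hα0 : 0 < α) (hα1 : α < 1 / 2)
    (i j i' j' : ℕ)
    (hi : 1 ≤ i) (hin : i ≤ n) (hj : 1 ≤ j) (hjn : j ≤ n)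
    (hi' : 1 ≤ i') (hin' : i' ≤ n) (hj' : 1 ≤ j') (hjn' : j' ≤ n)
    (hne : i ≠ j) (hne' : i' ≠ j') :
    (((1 : Matrix (Fin n) (Fin n) ℝ) - α • cycleAdj n)⁻¹ - 1)
        ⟨i - 1, by omega⟩ ⟨j - 1, by omega⟩
      < (((1 : Matrix (Fin n) (Fin n) ℝ) - α • cycleAdj n)⁻¹ - 1)
          ⟨i' - 1, by omega⟩ ⟨j' - 1, by omega⟩
    ↔ min ((i : ℤ) - j).natAbs (n - ((i : ℤ) - j).natAbs)
        > min ((i' : ℤ) - j').natAbs (n - ((i' : ℤ) - j').natAbs) := by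
  simpa [cycleDist, hi, hj, hi', hj'] using stmt15_general (by omega) hα0 hα1
    (i := ⟨i - 1, by omega⟩) (j := ⟨j - 1, by omega⟩) (i' := ⟨i' - 1, by omega⟩)
    (j' := ⟨j' - 1, by omega⟩) (by grind) (by grind)
end
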